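/- Let n ≥ 1, 1/2 < s < 1, and μ > 0. Let g : ℝⁿ × ℝ → ℝ satisfy g(x,t₁) − g(x,t₂) ≥ μ(t₁ − t₂) for all x ∈ ℝⁿ and all t₁ ≥ t₂. Let u, v : ℝⁿ → ℝ be continuous functions such that for every x ∈ ℝⁿ and every symmetric positive-definite n×n matrix A with det A = 1, the functions y ↦ δ(u,x,y)/|A⁻¹y|^{n+2s} and y ↦ δ(v,x,y)/|A⁻¹y|^{n+2s} are Lebesgue integrable on ℝⁿ. Assume that for every x: (i) L_A u(x) ≥ g(x, u(x)) for every admissible A (i.e. D_s u(x) ≥ g(x,u(x))); (ii) inf_A L_A v(x) ≤ g(x, v(x)) (i.e. D_s v(x) ≤ g(x,v(x))); and (iii) (u − v)(x) → 0 as |x| → ∞. Then u(x) ≤ v(x) for all x ∈ ℝⁿ. -/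

import Mathlib

open MeasureTheory

noncomputable def surfOmega (k : ℕ) : ℝ := 2 * Real.pi ^ ((k : ℝ) / 2) / Real.Gamma ((k : ℝ) / 2)

noncomputable def mu1 (s L C : ℝ) : ℝ := L ^ (2 - 2 * s) * (C / 2) ^ (2 * s - 1) / (2 * s - 1)

noncomputable def C1 (n : ℕ) (s L C : ℝ) : ℝ :=
  (Real.sqrt Real.pi * Real.Gamma (((n : ℝ) - 1) / 2 + s) / Real.Gamma ((n : ℝ) / 2 + s)) *
    (mu1 s L C * surfOmega (n - 1) / 2)

noncomputable def C2 (n : ℕ) (s : ℝ) : ℝ :=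
  surfOmega (n - 1) * Real.Gamma (((n : ℝ) - 1) / 2) * Real.Gamma (s + 1 / 2) /
    (2 * Real.Gamma ((n : ℝ) / 2 + s))

noncomputable def mu0 (n : ℕ) (s L C η₀ : ℝ) : ℝ :=
  C1 n s L C ^ (1 - (n : ℝ)) * (C2 n s)⁻¹ * (η₀ / 2) ^ (n : ℝ)

/-- Second-order increment `δ(u,x,y) = u(x+y) + u(x-y) - 2u(x)`. -/
noncomputable def delta2 {n : ℕ} (u : EuclideanSpace ℝ (Fin n) → ℝ)
    (x y : EuclideanSpace ℝ (Fin n)) : ℝ :=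
  u (x + y) + u (x - y) - 2 * u x

/-- Integrand `δ(u,x,y)/|A⁻¹ y|^(n+2s)`. -/
noncomputable def kernelA {n : ℕ} (s : ℝ) (A : Matrix (Fin n) (Fin n) ℝ)
    (u : EuclideanSpace ℝ (Fin n) → ℝ) (x y : EuclideanSpace ℝ (Fin n)) : ℝ :=
  delta2 u x y /
    ‖(EuclideanSpace.equiv (Fin n) ℝ).symm (A⁻¹.mulVec (EuclideanSpace.equiv (Fin n) ℝ y))‖ ^
      ((n : ℝ) + 2 * s)

/-- The linear operator `L_A u(x) = (1/2) ∫ δ(u,x,y)/|A⁻¹ y|^(n+2s) dy`. -/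
noncomputable def LA {n : ℕ} (s : ℝ) (A : Matrix (Fin n) (Fin n) ℝ)
    (u : EuclideanSpace ℝ (Fin n) → ℝ) (x : EuclideanSpace ℝ (Fin n)) : ℝ :=
  (1 / 2) * ∫ y, kernelA s A u x y


open Filter

/-!
If `u - v` is positive somewhere it has a positive maximum `x₀`, because it vanishes at infinity. At
`x₀` every second increment of `u` is at most that of `v`. The kernels `|A⁻¹y|^(-(n+2s))` are
nonnegative, so `g (x₀, u x₀) ≤ L_A u x₀ ≤ L_A v x₀` for every admissible `A`; taking the infimum
over `A` gives `g (x₀, u x₀) ≤ g (x₀, v x₀)`, which strict monotonicity of `g (x₀, ·)` forbids.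
-/

section MaximumAtInfinity

variable {X α : Type*} [TopologicalSpace X] [LinearOrder α] {w : X → α}

theorem exists_isMaxOn_univ_of_upperSemicontinuous (hw : UpperSemicontinuous w) (x₁ : X)
    (hx₁ : ∀ᶠ x in cocompact X, w x ≤ w x₁) : ∃ x₀, IsMaxOn w Set.univ x₀ := by
  obtain ⟨K, hK, hKw⟩ := mem_cocompact.1 hx₁
  obtain ⟨x₀, -, hmax⟩ := (hw.upperSemicontinuousOn (insert x₁ K)).exists_isMaxOn
    (Set.insert_nonempty x₁ K) (hK.insert x₁)
  refine ⟨x₀, isMaxOn_univ_iff.2 fun x => ?_⟩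
  by_cases hx : x ∈ K
  · exact hmax (Set.mem_insert_of_mem x₁ hx)
  · exact (hKw hx).trans (hmax (Set.mem_insert x₁ K))

theorem le_of_forall_isMaxOn_univ_le {c : α} (hw : UpperSemicontinuous w)
    (hlim : ∀ b > c, ∀ᶠ x in cocompact X, w x ≤ b)
    (hmax : ∀ x, IsMaxOn w Set.univ x → w x ≤ c) (x : X) : w x ≤ c := by
  by_contra! hx
  obtain ⟨x₀, hx₀⟩ := exists_isMaxOn_univ_of_upperSemicontinuous hw x (hlim (w x) hx)
  exact hx.not_ge ((hx₀ (Set.mem_univ x)).trans (hmax x₀ hx₀))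

end MaximumAtInfinity

theorem strictMono_of_mul_sub_le {R : Type*} [Ring R] [PartialOrder R] [IsStrictOrderedRing R]
    {f : R → R} {μ : R} (hμ : 0 < μ)
    (hf : ∀ t₁ t₂, t₂ ≤ t₁ → μ * (t₁ - t₂) ≤ f t₁ - f t₂) : StrictMono f :=
  fun t₂ t₁ ht => sub_pos.1 ((mul_pos hμ (sub_pos.2 ht)).trans_le (hf t₁ t₂ ht.le))

/-- The fractional Monge–Ampère operator `D_s u(x) = inf_A L_A u(x)`, the infimum running over the
positive definite `A` of determinant one. It is a real infimum, so it takes the value `0` where the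
numbers `L_A u(x)` are unbounded below. -/
noncomputable def fracMongeAmpere {n : ℕ} (s : ℝ) (u : EuclideanSpace ℝ (Fin n) → ℝ)
    (x : EuclideanSpace ℝ (Fin n)) : ℝ :=
  sInf {z : ℝ | ∃ A : Matrix (Fin n) (Fin n) ℝ, A.PosDef ∧ A.det = 1 ∧ z = LA s A u x}

section Comparison

variable {n : ℕ} {s : ℝ} {A : Matrix (Fin n) (Fin n) ℝ} {u v : EuclideanSpace ℝ (Fin n) → ℝ}
  {x : EuclideanSpace ℝ (Fin n)}

theorem delta2_le_delta2_of_isMaxOn_sub (h : IsMaxOn (fun z => u z - v z) Set.univ x)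
    (y : EuclideanSpace ℝ (Fin n)) : delta2 u x y ≤ delta2 v x y := by
  have h_add := isMaxOn_univ_iff.1 h (x + y)
  have h_sub := isMaxOn_univ_iff.1 h (x - y)
  unfold delta2
  linarith

theorem LA_le_LA_of_delta2_le (hu : Integrable (kernelA s A u x))
    (hv : Integrable (kernelA s A v x)) (h : ∀ y, delta2 u x y ≤ delta2 v x y) :
    LA s A u x ≤ LA s A v x := by
  have h_kernel (y) : kernelA s A u x y ≤ kernelA s A v x y :=
    div_le_div_of_nonneg_right (h y) (Real.rpow_nonneg (norm_nonneg _) _)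
  exact mul_le_mul_of_nonneg_left (integral_mono hu hv h_kernel) one_half_pos.le

theorem le_fracMongeAmpere {c : ℝ}
    (h : ∀ A : Matrix (Fin n) (Fin n) ℝ, A.PosDef → A.det = 1 → c ≤ LA s A u x) :
    c ≤ fracMongeAmpere s u x := by
  refine le_csInf ⟨_, 1, Matrix.PosDef.one, Matrix.det_one, rfl⟩ ?_
  rintro _ ⟨A, hA, hdet, rfl⟩
  exact h A hA hdet

end Comparison

theorem stmt15_general {n : ℕ} {s : ℝ} {g : EuclideanSpace ℝ (Fin n) × ℝ → ℝ}
    (hg : ∀ x, StrictMono fun t => g (x, t))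
    {u v : EuclideanSpace ℝ (Fin n) → ℝ} (huv : UpperSemicontinuous fun x => u x - v x)
    (hintu : ∀ x (A : Matrix (Fin n) (Fin n) ℝ),
      A.PosDef → A.det = 1 → Integrable (kernelA s A u x))
    (hintv : ∀ x (A : Matrix (Fin n) (Fin n) ℝ),
      A.PosDef → A.det = 1 → Integrable (kernelA s A v x))
    (hsub : ∀ x (A : Matrix (Fin n) (Fin n) ℝ),
      A.PosDef → A.det = 1 → g (x, u x) ≤ LA s A u x)
    (hsup : ∀ x, fracMongeAmpere s v x ≤ g (x, v x))
    (hlim : ∀ ε > 0, ∀ᶠ x in cocompact (EuclideanSpace ℝ (Fin n)), u x - v x ≤ ε)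
    (x : EuclideanSpace ℝ (Fin n)) : u x ≤ v x := by
  suffices h_max : ∀ x₀, IsMaxOn (fun x => u x - v x) Set.univ x₀ → u x₀ - v x₀ ≤ 0 from
    sub_nonpos.1 (le_of_forall_isMaxOn_univ_le huv hlim h_max x)
  intro x₀ hx₀
  have h_LA (A : Matrix (Fin n) (Fin n) ℝ) (hA : A.PosDef) (hdet : A.det = 1) :
      LA s A u x₀ ≤ LA s A v x₀ :=
    LA_le_LA_of_delta2_le (hintu x₀ A hA hdet) (hintv x₀ A hA hdet)
      (delta2_le_delta2_of_isMaxOn_sub hx₀)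
  have h_g : g (x₀, u x₀) ≤ g (x₀, v x₀) :=
    calc g (x₀, u x₀) ≤ fracMongeAmpere s v x₀ :=
          le_fracMongeAmpere fun A hA hdet => (hsub x₀ A hA hdet).trans (h_LA A hA hdet)
      _ ≤ g (x₀, v x₀) := hsup x₀
  exact sub_nonpos.2 ((hg x₀).le_iff_le.1 h_g)

theorem stmt15 (n : ℕ) (hn : 1 ≤ n) (s μ : ℝ) (hs : 1 / 2 < s) (hs1 : s < 1) (hμ : 0 < μ)
    (g : EuclideanSpace ℝ (Fin n) × ℝ → ℝ)
    (hgmono : ∀ (x : EuclideanSpace ℝ (Fin n)) (t₁ t₂ : ℝ), t₂ ≤ t₁ →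
      μ * (t₁ - t₂) ≤ g (x, t₁) - g (x, t₂))
    (u v : EuclideanSpace ℝ (Fin n) → ℝ) (hu : Continuous u) (hv : Continuous v)
    (hintu : ∀ (x : EuclideanSpace ℝ (Fin n)) (A : Matrix (Fin n) (Fin n) ℝ),
      A.PosDef → A.det = 1 → Integrable (fun y => kernelA s A u x y))
    (hintv : ∀ (x : EuclideanSpace ℝ (Fin n)) (A : Matrix (Fin n) (Fin n) ℝ),
      A.PosDef → A.det = 1 → Integrable (fun y => kernelA s A v x y))
    (hsub : ∀ (x : EuclideanSpace ℝ (Fin n)) (A : Matrix (Fin n) (Fin n) ℝ),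
      A.PosDef → A.det = 1 → g (x, u x) ≤ LA s A u x)
    (hsup : ∀ x : EuclideanSpace ℝ (Fin n),
      sInf {z : ℝ | ∃ A : Matrix (Fin n) (Fin n) ℝ, A.PosDef ∧ A.det = 1 ∧ z = LA s A v x} ≤
        g (x, v x))
    (hlim : Tendsto (fun x => u x - v x) (cocompact (EuclideanSpace ℝ (Fin n))) (nhds 0)) :
    ∀ x, u x ≤ v x := by
  exact stmt15_general (fun x => strictMono_of_mul_sub_le hμ (hgmono x))
    (hu.sub hv).upperSemicontinuous hintu hintv hsub hsup fun _ hε => hlim.eventually_le_const hε
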